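/- Let G be a d-dimensional simplicial complex on vertex set Fin n with incidence matrix ∂ and Laplacian matrix L_G = ∂ · ∂ᵀ. Then, as an identity in the polynomial ring ℤ[x], det(L_G + x·Id) = Σ over all rooted forests (F,R) of G of (Nat.card H_{d-1}(F,R))² · x^{|R|}, where Id is the identity matrix with rows and columns indexed by G_{d-1}. -/

import Mathlib

open Finset

/-- `G` is a `d`-dimensional simplicial complex on vertex set `Fin n`. -/
def IsComplex (n d : ℕ) (G : Finset (Finset (Fin n))) : Prop :=
  (∀ f ∈ G, ∀ g ⊆ f, g ∈ G) ∧ (∀ f ∈ G, f.card ≤ d + 1) ∧ ∃ f ∈ G, f.card = d + 1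

/-- The `k`-dimensional faces of `G` (faces of cardinality `k+1`). -/
def faces {n : ℕ} (G : Finset (Finset (Fin n))) (k : ℕ) : Finset (Finset (Fin n)) :=
  G.filter fun f => f.card = k + 1

/-- Incidence entry `∂[r,f]`: equals `(-1)^j` if `r` is obtained from `f` by deleting
its `j`-th smallest element (indexing from 0), and `0` if `r ⊄ f`. -/
def incEntry {n : ℕ} (r f : Finset (Fin n)) : ℤ :=
  if r ⊆ f then
    (-1 : ℤ) ^ ((f \ r).sum fun v => (f.filter fun w => w < v).card)
  else 0

/-- `F` is a forest of the `d`-dimensional complex `G`: the columns of the incidence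
matrix indexed by `F` are linearly independent over `ℚ`. -/
def IsForest (n d : ℕ) (G F : Finset (Finset (Fin n))) : Prop :=
  F ⊆ faces G d ∧
    LinearIndependent ℚ fun f : F => fun r : faces G (d - 1) => (incEntry r.1 f.1 : ℚ)

/-- `R` is a root of `F`: the rows indexed by `R̄ = G_{d-1} \ R` of the submatrix of the
incidence matrix with column set `F` are linearly independent and span the row space of
that submatrix. -/
def IsRoot (n d : ℕ) (G F R : Finset (Finset (Fin n))) : Prop :=
  R ⊆ faces G (d - 1) ∧
    LinearIndependent ℚ
      (fun r : (faces G (d - 1) \ R : Finset (Finset (Fin n))) =>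
        fun f : F => (incEntry r.1 f.1 : ℚ)) ∧
    Submodule.span ℚ
        (Set.range fun r : (faces G (d - 1) \ R : Finset (Finset (Fin n))) =>
          fun f : F => (incEntry r.1 f.1 : ℚ)) =
      Submodule.span ℚ
        (Set.range fun r : (faces G (d - 1) : Finset (Finset (Fin n))) =>
          fun f : F => (incEntry r.1 f.1 : ℚ))

/-- `(F,R)` is a rooted forest of the `d`-dimensional complex `G`. -/
def IsRootedForest (n d : ℕ) (G F R : Finset (Finset (Fin n))) : Prop :=
  IsForest n d G F ∧ IsRoot n d G F R


/-- The incidence matrix `∂` of the `d`-dimensional complex `G`, with rows indexed by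
`G_{d-1}` and columns indexed by `G_d`. -/
def incMatrix (n d : ℕ) (G : Finset (Finset (Fin n))) :
    Matrix (faces G (d - 1) : Finset (Finset (Fin n)))
      (faces G d : Finset (Finset (Fin n))) ℤ :=
  Matrix.of fun r f => incEntry r.1 f.1

/-- The Laplacian matrix `L_G = ∂ · ∂ᵀ`. -/
def lapMat (n d : ℕ) (G : Finset (Finset (Fin n))) :
    Matrix (faces G (d - 1) : Finset (Finset (Fin n)))
      (faces G (d - 1) : Finset (Finset (Fin n))) ℤ :=
  incMatrix n d G * (incMatrix n d G).transpose

/-- The subgroup of `ℤ^{G_{d-1}}` generated by the standard basis vectors `e_r` for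
`r ∈ R` together with the columns of the incidence matrix indexed by the elements
of `F`. -/
def relSubgroup (n d : ℕ) (G F R : Finset (Finset (Fin n))) :
    AddSubgroup ((faces G (d - 1) : Finset (Finset (Fin n))) → ℤ) :=
  AddSubgroup.closure
    ({v | ∃ r : (faces G (d - 1) : Finset (Finset (Fin n))), r.1 ∈ R ∧
        v = Pi.single r 1} ∪
      {v | ∃ f : (faces G d : Finset (Finset (Fin n))), f.1 ∈ F ∧
        v = fun r => incEntry r.1 f.1})

/-! The rooted forests `(F, R)` of an integer matrix `A` are exactly the bases contained in the
columns of `[A | 1]`: modulo the basis vectors `e_r`, `r ∈ R`, the columns in `F` become those of a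
square submatrix `A_{R̄,F}`, which is nonsingular precisely when `R̄` is a basis of the rows of
`A_F` and `F` is independent. The matrix `A diag(y) Aᵀ + diag(x)` equals
`[A | 1] diag(y, x) [A | 1]ᵀ`, so Cauchy–Binet expands its determinant as a sum of squared
maximal minors of `[A | 1]`, weighted by monomials in `x` and `y`. A nonzero such minor is, up to
sign, the index of the lattice spanned by its columns, and this lattice is the group of relative
boundaries of `(F, R)`.
-/

section CauchyBinet

variable {m k S : Type*} [Fintype m] [DecidableEq m] [CommRing S]

theorem det_mul_eq_sum_pi [Fintype k] (A : Matrix m k S) (B : Matrix k m S) :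
    (A * B).det = ∑ f : m → k, (A.submatrix id f).det * ∏ i, B (f i) i := by
  have hrows : (A * B).transpose = fun i => ∑ j, B j i • A.transpose j := by
    ext i r
    simp [Matrix.mul_apply, mul_comm]
  calc (A * B).det
      = Matrix.detRowAlternating (fun i => ∑ j, B j i • A.transpose j) := by
        rw [← hrows, ← Matrix.det_transpose]; rfl
    _ = ∑ f : m → k, Matrix.detRowAlternating (fun i => B (f i) i • A.transpose (f i)) :=
        Matrix.detRowAlternating.toMultilinearMap.map_sum _
    _ = ∑ f : m → k, (A.submatrix id f).det * ∏ i, B (f i) i := by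
        refine Fintype.sum_congr _ _ fun f => ?_
        rw [AlternatingMap.map_smul_univ, smul_eq_mul, mul_comm, ← Matrix.det_transpose]
        rfl

theorem sum_perm_det_submatrix_mul_prod (A : Matrix m k S) (B : Matrix k m S) (e : m → k) :
    ∑ σ : Equiv.Perm m, (A.submatrix id (e ∘ σ)).det * ∏ i, B (e (σ i)) i =
      (A.submatrix id e).det * (B.submatrix e id).det := by
  rw [Matrix.det_apply' (B.submatrix e id), mul_sum]
  refine Fintype.sum_congr _ _ fun σ => ?_
  rw [← Function.id_comp id, ← Matrix.submatrix_submatrix, Matrix.det_permute']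
  simp only [Matrix.submatrix_apply, id_eq, Function.comp_id]
  ring

/-- Cauchy–Binet. The bijections `e T` are arbitrary because changing one of them multiplies both
minors by the same sign. -/
theorem det_mul_eq_sum_minors [Fintype k] (A : Matrix m k S) (B : Matrix k m S)
    (e : ∀ T : {T : Finset k // #T = Fintype.card m}, m ≃ T.1) :
    (A * B).det = ∑ T, (A.submatrix id fun i => (e T i).1).det *
      (B.submatrix (fun i => (e T i).1) id).det := by
  classical
  -- Only injective `f : m → k` contribute, and these are a range `T` together with a permutation.
  let emb : (Σ _ : {T : Finset k // #T = Fintype.card m}, Equiv.Perm m) → m → k :=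
    fun p i => e p.1 (p.2 i)
  have image_emb (p) : univ.image (emb p) = p.1.1 := by
    ext j
    simp only [emb, mem_image, mem_univ, true_and]
    exact ⟨fun ⟨i, hi⟩ => hi ▸ (e p.1 (p.2 i)).2,
      fun hj => ⟨p.2.symm ((e p.1).symm ⟨j, hj⟩), by simp⟩⟩
  have emb_injective : Function.Injective emb := by
    rintro ⟨T, σ⟩ ⟨T', σ'⟩ h
    obtain rfl : T = T' := Subtype.ext <| by simpa only [image_emb] using congrArg (univ.image ·) h
    have hσ : σ = σ' := Equiv.ext fun i => (e T).injective (Subtype.ext (congrFun h i))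
    rw [hσ]
  have mem_range_emb (f : m → k) (hf : Function.Injective f) : f ∈ Set.range emb := by
    let T : {T : Finset k // #T = Fintype.card m} :=
      ⟨univ.image f, by rw [card_image_of_injective _ hf, card_univ]⟩
    let f' : m → T.1 := fun i => ⟨f i, mem_image_of_mem f (mem_univ i)⟩
    have hσ : Function.Injective ((e T).symm ∘ f') :=
      (e T).symm.injective.comp fun i j h => hf (congrArg Subtype.val h)
    exact ⟨⟨T, Equiv.ofBijective _ (Finite.injective_iff_bijective.1 hσ)⟩,
      funext fun i => by simp [emb, f']⟩
  rw [det_mul_eq_sum_pi, ← Fintype.sum_of_injective emb emb_injective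
    (fun p => (A.submatrix id (emb p)).det * ∏ i, B (emb p i) i), Fintype.sum_sigma]
  · exact Fintype.sum_congr _ _ fun T => sum_perm_det_submatrix_mul_prod A B fun i => (e T i).1
  · intro f hf
    obtain ⟨i, j, hij, hne⟩ := Function.not_injective_iff.1 fun h => hf (mem_range_emb f h)
    rw [Matrix.det_zero_of_column_eq hne (fun r => by simp [hij]), zero_mul]
  · exact fun _ => rfl

theorem det_mul_diagonal_mul_transpose_eq_sum_sq_minors [Fintype k] [DecidableEq k]
    (A : Matrix m k S) (w : k → S) (e : ∀ T : {T : Finset k // #T = Fintype.card m}, m ≃ T.1) :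
    (A * Matrix.diagonal w * A.transpose).det =
      ∑ T, (A.submatrix id fun i => (e T i).1).det ^ 2 * ∏ j ∈ T.1, w j := by
  rw [Matrix.mul_assoc, det_mul_eq_sum_minors _ _ e]
  refine Fintype.sum_congr _ _ fun T => ?_
  have hdiag : (Matrix.diagonal w * A.transpose).submatrix (fun i => (e T i).1) id =
      Matrix.of fun i j : m => w (e T i).1 * (A.submatrix id fun i => (e T i).1).transpose i j := by
    ext i j
    simp [Matrix.diagonal_mul]
  have hprod : ∏ i : m, w (e T i).1 = ∏ j ∈ T.1, w j := by
    rw [← prod_coe_sort T.1]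
    exact (e T).prod_comp fun j : T.1 => w j.1
  rw [hdiag, Matrix.det_mul_column, Matrix.det_transpose, hprod]
  ring

end CauchyBinet

section LinearAlgebra

theorem card_quotient_closure_range_col {m : Type*} [Fintype m] [DecidableEq m]
    (M : Matrix m m ℤ) (h : M.det ≠ 0) :
    Nat.card ((m → ℤ) ⧸ AddSubgroup.closure (Set.range M.col)) = M.det.natAbs := by
  have hcol : LinearIndependent ℤ M.col := Matrix.linearIndependent_cols_of_det_ne_zero h
  have hbasis : Subtype.val ∘ Module.Basis.span hcol = M.col :=
    funext fun i => congrArg Subtype.val (Module.Basis.span_apply hcol i)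
  have hindex := Submodule.natAbs_det_basis_change (Pi.basisFun ℤ m) _ (.span hcol)
  rw [hbasis, Pi.basisFun_det] at hindex
  rw [← Submodule.span_int_eq_addSubgroupClosure, ← Matrix.det_transpose M]
  exact hindex.symm

theorem linearIndependent_comp_iff {K V W ι : Type*} [Ring K] [AddCommGroup V] [Module K V]
    [AddCommGroup W] [Module K W] (f : V →ₗ[K] W) (v : ι → V) :
    LinearIndependent K (f ∘ v) ↔
      LinearIndependent K v ∧ Disjoint (Submodule.span K (Set.range v)) (LinearMap.ker f) :=
  ⟨fun h => ⟨h.of_comp f, Submodule.range_ker_disjoint h⟩, fun h => h.1.map h.2⟩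

/-- The vectors `v i` with `i ∈ s` form a basis of the span of the whole family `v`. -/
def IsSpanBasisOn (K : Type*) {V ι : Type*} [Semiring K] [AddCommMonoid V] [Module K V]
    (v : ι → V) (s : Set ι) : Prop :=
  LinearIndepOn K v s ∧ Submodule.span K (v '' s) = Submodule.span K (Set.range v)

theorem isSpanBasisOn_linearEquiv_comp_iff {K V W ι : Type*} [Semiring K] [AddCommMonoid V]
    [Module K V] [AddCommMonoid W] [Module K W] (L : V ≃ₗ[K] W) (v : ι → V) (s : Set ι) :
    IsSpanBasisOn K (L ∘ v) s ↔ IsSpanBasisOn K v s := by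
  refine and_congr (L.toLinearMap.linearIndepOn_iff_of_injOn L.injective.injOn) ?_
  have hspan (t : Set V) : Submodule.span K (L '' t) = (Submodule.span K t).map L.toLinearMap :=
    Submodule.span_image L.toLinearMap
  rw [Set.image_comp, Set.range_comp, hspan, hspan,
    (Submodule.map_injective_of_injective L.injective).eq_iff]

theorem linearIndepOn_image_iff {K V ι κ : Type*} [Semiring K] [AddCommMonoid V] [Module K V]
    {f : ι → κ} (hf : Function.Injective f) (v : κ → V) (s : Set ι) :
    LinearIndepOn K v (f '' s) ↔ LinearIndepOn K (v ∘ f) s :=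
  (linearIndependent_equiv' (Equiv.Set.image f s hf) rfl).symm

theorem ker_funLeft_compl_eq_span {K m : Type*} [Ring K] [Fintype m] [DecidableEq m]
    (R : Finset m) :
    LinearMap.ker (LinearMap.funLeft K K ((↑) : (Rᶜ : Finset m) → m)) =
      Submodule.span K ((1 : Matrix m m K).col '' R) := by
  have hcol : (1 : Matrix m m K).col = Pi.basisFun K m := by
    ext i j
    simp [Matrix.one_apply, Pi.single_apply]
  rw [hcol]
  change _ = Pi.spanSubset K (R : Set m)
  ext v
  rw [Pi.mem_spanSubset_iff]
  simp [LinearMap.mem_ker, funext_iff, LinearMap.funLeft_apply]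

variable {K ι κ : Type*} [Field K]

theorem linearIndependent_col_iff_span_row_eq_top [Finite ι] [Finite κ]
    (M : Matrix ι κ K) :
    LinearIndependent K M.col ↔ Submodule.span K (Set.range M.row) = ⊤ := by
  have := Fintype.ofFinite ι
  have := Fintype.ofFinite κ
  rw [linearIndependent_iff_card_eq_finrank_span, Set.finrank, ← M.rank_eq_finrank_span_cols,
    M.rank_eq_finrank_span_row, ← Module.finrank_fintype_fun_eq_card (R := K), eq_comm]
  exact ⟨Submodule.eq_top_of_finrank_eq, fun h => by rw [h, finrank_top]⟩

theorem linearIndependent_iff_card_eq_of_span_eq_top [Fintype ι] [Fintype κ] {v : ι → κ → K}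
    (hv : Submodule.span K (Set.range v) = ⊤) :
    LinearIndependent K v ↔ Fintype.card ι = Fintype.card κ := by
  rw [linearIndependent_iff_card_eq_finrank_span, Set.finrank, hv, finrank_top,
    Module.finrank_fintype_fun_eq_card]

theorem linearIndependent_col_and_isSpanBasisOn_row_iff [Finite ι] [Fintype κ] (M : Matrix ι κ K)
    (s : Finset ι) :
    LinearIndependent K M.col ∧ IsSpanBasisOn K M.row s ↔
      #s = Fintype.card κ ∧ LinearIndependent K (M.submatrix ((↑) : s → ι) id).col := by
  have hrange : M.row '' s = Set.range (M.submatrix ((↑) : s → ι) id).row := by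
    rw [Set.image_eq_range]
    rfl
  rw [IsSpanBasisOn, linearIndependent_col_iff_span_row_eq_top,
    linearIndependent_col_iff_span_row_eq_top, hrange, ← Fintype.card_coe]
  change _ ∧ LinearIndependent K (M.submatrix ((↑) : s → ι) id).row ∧ _ ↔ _
  constructor
  · rintro ⟨htop, hli, heq⟩
    rw [htop] at heq
    exact ⟨(linearIndependent_iff_card_eq_of_span_eq_top heq).1 hli, heq⟩
  · rintro ⟨hcard, htop⟩
    have h : Submodule.span K (Set.range M.row) = ⊤ :=
      top_le_iff.1 (htop ▸ Submodule.span_mono (hrange ▸ Set.image_subset_range _ _))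
    exact ⟨h, (linearIndependent_iff_card_eq_of_span_eq_top htop).2 hcard, htop.trans h.symm⟩

end LinearAlgebra

section AugmentedMatrix

variable {m k S : Type*} [DecidableEq m]

theorem coe_disjSum {α β : Type*} (s : Finset α) (t : Finset β) :
    (s.disjSum t : Set (α ⊕ β)) = Sum.inl '' s ∪ Sum.inr '' t := by
  ext (a | b) <;> simp

/-- The matrix `[M | 1]`, whose columns are those of `M` followed by the standard basis vectors.
A pair of a set `F` of columns and a set `R` of rows of `M` is encoded as the set `F.disjSum R` of
columns of `[M | 1]`. -/
def augment [Zero S] [One S] (M : Matrix m k S) : Matrix m (k ⊕ m) S :=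
  Matrix.fromCols M 1

theorem image_col_augment_disjSum [Zero S] [One S] (M : Matrix m k S) (F : Finset k)
    (R : Finset m) :
    (augment M).col '' (F.disjSum R : Set (k ⊕ m)) =
      M.col '' F ∪ (fun r => Pi.single r 1) '' (R : Set m) := by
  have hcol : (augment M).col = Sum.elim M.col fun r => Pi.single r 1 := by
    ext (f | r) i <;> simp [augment, Matrix.one_apply, Pi.single_apply]
  rw [hcol, coe_disjSum, Set.image_union, Set.image_image, Set.image_image]
  rfl

theorem mul_diagonal_mul_transpose_add_diagonal [Fintype m] [Fintype k] [DecidableEq k]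
    [CommSemiring S] (M : Matrix m k S) (y : k → S) (x : m → S) :
    M * Matrix.diagonal y * M.transpose + Matrix.diagonal x =
      augment M * Matrix.diagonal (Sum.elim y x) * (augment M).transpose := by
  have hscale : augment M * Matrix.diagonal (Sum.elim y x) =
      Matrix.fromCols (M * Matrix.diagonal y) (Matrix.diagonal x) := by
    ext i (f | r)
    · simp [augment, Matrix.mul_diagonal]
    · simp +contextual [augment, Matrix.mul_diagonal, Matrix.one_apply, Matrix.diagonal_apply]
  rw [hscale, augment, Matrix.transpose_fromCols, Matrix.fromCols_mul_fromRows,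
    Matrix.transpose_one, Matrix.mul_one]

end AugmentedMatrix

section RootedForest

variable {m k K : Type*} [Field K]

/-- Rooted forests of an arbitrary matrix `M` over a field: the columns in `F` are independent, and
the rows outside `R` of the submatrix on these columns form a basis of its row space. -/
def IsMatrixRootedForest (M : Matrix m k K) (F : Finset k) (R : Finset m) : Prop :=
  LinearIndepOn K M.col F ∧
    IsSpanBasisOn K (M.submatrix id ((↑) : F → k)).row (↑R)ᶜ

variable [Fintype m] [DecidableEq m]

theorem linearIndepOn_col_augment_disjSum_iff (M : Matrix m k K) (F : Finset k) (R : Finset m) :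
    LinearIndepOn K (augment M).col (F.disjSum R : Set (k ⊕ m)) ↔
      LinearIndependent K (M.submatrix ((↑) : (Rᶜ : Finset m) → m) ((↑) : F → k)).col := by
  have hone : LinearIndepOn K (1 : Matrix m m K).col R :=
    (Matrix.linearIndependent_cols_iff_isUnit.2 isUnit_one).linearIndepOn _
  have hinl : (augment M).col ∘ Sum.inl = M.col := rfl
  have hinr : (augment M).col ∘ Sum.inr = (1 : Matrix m m K).col := rfl
  have hres : (M.submatrix ((↑) : (Rᶜ : Finset m) → m) ((↑) : F → k)).col =
      LinearMap.funLeft K K ((↑) : (Rᶜ : Finset m) → m) ∘ fun f : F => M.col f := rfl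
  rw [coe_disjSum, linearIndepOn_union_iff Set.disjoint_image_inl_image_inr,
    linearIndepOn_image_iff Sum.inl_injective, linearIndepOn_image_iff Sum.inr_injective,
    ← Set.image_comp, ← Set.image_comp, hinl, hinr, and_iff_right hone, hres,
    linearIndependent_comp_iff, ker_funLeft_compl_eq_span, LinearIndepOn, Set.image_eq_range]
  rfl

theorem isMatrixRootedForest_iff_linearIndepOn (M : Matrix m k K) (F : Finset k) (R : Finset m) :
    IsMatrixRootedForest M F R ↔
      #(F.disjSum R) = Fintype.card m ∧
        LinearIndepOn K (augment M).col (F.disjSum R : Set (k ⊕ m)) := by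
  have hcard : #Rᶜ = Fintype.card F ↔ #(F.disjSum R) = Fintype.card m := by
    rw [card_disjSum, Fintype.card_coe, ← card_compl_add_card R]
    omega
  rw [IsMatrixRootedForest, ← coe_compl, ← hcard, linearIndepOn_col_augment_disjSum_iff]
  exact linearIndependent_col_and_isSpanBasisOn_row_iff (M.submatrix id ((↑) : F → k)) Rᶜ

theorem isMatrixRootedForest_iff_det_ne_zero (M : Matrix m k K) {T : Finset (k ⊕ m)} (e : m ≃ T) :
    IsMatrixRootedForest M T.toLeft T.toRight ↔
      ((augment M).submatrix id fun i => (e i).1).det ≠ 0 := by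
  have hcard : #T = Fintype.card m := by
    rw [← Fintype.card_coe, Fintype.card_congr e]
  rw [isMatrixRootedForest_iff_linearIndepOn, toLeft_disjSum_toRight, and_iff_right hcard,
    ← isUnit_iff_ne_zero, ← Matrix.isUnit_iff_isUnit_det,
    ← Matrix.linearIndependent_cols_iff_isUnit]
  exact (linearIndependent_equiv e).symm

end RootedForest

section RelativeHomology

variable {m k S : Type*} [DecidableEq m]

/-- The subgroup of relative boundaries of an integer matrix `A`: its quotient is the relative
homology of the pair `(F, R)`. -/
def relBoundaries (A : Matrix m k ℤ) (F : Finset k) (R : Finset m) : AddSubgroup (m → ℤ) :=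
  AddSubgroup.closure ((fun r => Pi.single r 1) '' (R : Set m) ∪ A.col '' F)

theorem relBoundaries_eq_closure_range_col (A : Matrix m k ℤ) {T : Finset (k ⊕ m)} (e : m ≃ T) :
    relBoundaries A T.toLeft T.toRight =
      AddSubgroup.closure (Set.range ((augment A).submatrix id fun i => (e i).1).col) := by
  have hrange : Set.range ((augment A).submatrix id fun i => (e i).1).col =
      (augment A).col '' (T : Set (k ⊕ m)) := by
    rw [Set.image_eq_range]
    exact e.surjective.range_comp fun j => (augment A).col j
  rw [relBoundaries, hrange, Set.union_comm, ← image_col_augment_disjSum, toLeft_disjSum_toRight]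

variable [Fintype m] [CommRing S]

theorem intCast_det_submatrix_augment (A : Matrix m k ℤ) (f : m → k ⊕ m) :
    (((augment A).submatrix id f).det : S) =
      ((augment (A.map (Int.cast : ℤ → S))).submatrix id f).det := by
  rw [Int.cast_det, ← Matrix.submatrix_map, augment, augment, Matrix.fromCols_map,
    Matrix.map_one _ Int.cast_zero Int.cast_one]

open scoped Classical in
theorem sq_det_submatrix_augment (A : Matrix m k ℤ) {T : Finset (k ⊕ m)} (e : m ≃ T) :
    ((augment (A.map (Int.cast : ℤ → S))).submatrix id fun i => (e i).1).det ^ 2 =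
      if IsMatrixRootedForest (A.map (Int.cast : ℤ → ℚ)) T.toLeft T.toRight then
        (Nat.card ((m → ℤ) ⧸ relBoundaries A T.toLeft T.toRight) : S) ^ 2
      else 0 := by
  rw [isMatrixRootedForest_iff_det_ne_zero _ e, ← intCast_det_submatrix_augment,
    ← intCast_det_submatrix_augment, Int.cast_ne_zero]
  split_ifs with h
  · rw [relBoundaries_eq_closure_range_col A e, card_quotient_closure_range_col _ h]
    exact_mod_cast congrArg (Int.cast : ℤ → S) (Int.natAbs_sq _).symm
  · rw [not_not.1 h, Int.cast_zero, zero_pow two_ne_zero]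

open scoped Classical in
theorem det_lap_add_X_eq_sum_rootedForests_general [Fintype k] [DecidableEq k]
    (A : Matrix m k ℤ) (y : k → S) (x : m → S) :
    (A.map (Int.cast : ℤ → S) * Matrix.diagonal y * (A.map (Int.cast : ℤ → S)).transpose +
      Matrix.diagonal x).det =
    ∑ F : Finset k, ∑ R : Finset m,
      if IsMatrixRootedForest (A.map (Int.cast : ℤ → ℚ)) F R then
        (Nat.card ((m → ℤ) ⧸ relBoundaries A F R) : S) ^ 2 * ((∏ f ∈ F, y f) * ∏ r ∈ R, x r)
      else 0 := by
  let summand (F : Finset k) (R : Finset m) : S :=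
    if IsMatrixRootedForest (A.map (Int.cast : ℤ → ℚ)) F R then
      (Nat.card ((m → ℤ) ⧸ relBoundaries A F R) : S) ^ 2 * ((∏ f ∈ F, y f) * ∏ r ∈ R, x r)
    else 0
  let e (T : {T : Finset (k ⊕ m) // #T = Fintype.card m}) : m ≃ T.1 :=
    Fintype.equivOfCardEq (by rw [Fintype.card_coe, T.2])
  have hminor (T) : ((augment (A.map (Int.cast : ℤ → S))).submatrix id fun i => (e T i).1).det ^ 2 *
      ∏ j ∈ T.1, Sum.elim y x j = summand T.1.toLeft T.1.toRight := by
    have hprod : ∏ j ∈ T.1, Sum.elim y x j = (∏ f ∈ T.1.toLeft, y f) * ∏ r ∈ T.1.toRight, x r := by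
      rw [← toLeft_disjSum_toRight (u := T.1), prod_disjSum, toLeft_disjSum, toRight_disjSum]
      rfl
    rw [sq_det_submatrix_augment, hprod, ite_mul, zero_mul]
  have hcard (T : Finset (k ⊕ m)) (hT : summand T.toLeft T.toRight ≠ 0) : #T = Fintype.card m := by
    have hforest : IsMatrixRootedForest (A.map (Int.cast : ℤ → ℚ)) T.toLeft T.toRight :=
      of_not_not fun h => hT (if_neg h)
    rw [← toLeft_disjSum_toRight (u := T)]
    exact ((isMatrixRootedForest_iff_linearIndepOn _ _ _).1 hforest).1
  calc _
    _ = ∑ T : {T : Finset (k ⊕ m) // #T = Fintype.card m}, summand T.1.toLeft T.1.toRight := by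
      rw [mul_diagonal_mul_transpose_add_diagonal,
        det_mul_diagonal_mul_transpose_eq_sum_sq_minors _ _ e]
      exact Fintype.sum_congr _ _ hminor
    _ = ∑ T with #T = Fintype.card m, summand T.toLeft T.toRight :=
      (sum_subtype {T : Finset (k ⊕ m) | #T = Fintype.card m} (by simp)
        fun T => summand T.toLeft T.toRight).symm
    _ = ∑ T : Finset (k ⊕ m), summand T.toLeft T.toRight := sum_filter_of_ne fun T _ => hcard T
    _ = ∑ p : Finset k × Finset m, summand p.1 p.2 :=
      Finset.sumEquiv.toEquiv.sum_comp fun p => summand p.1 p.2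
    _ = ∑ F, ∑ R, summand F R := Fintype.sum_prod_type' summand

end RelativeHomology

section SimplicialComplex

theorem sum_powerset_eq_sum_map_subtype {α M : Type*} [AddCommMonoid M] (s : Finset α)
    (f : Finset α → M) :
    ∑ t ∈ s.powerset, f t = ∑ t : Finset s, f (t.map (.subtype (· ∈ s))) := by
  classical
  symm
  refine sum_nbij (map (.subtype (· ∈ s))) (fun t _ => ?_) (map_injective _).injOn
    (fun t ht => ?_) fun _ _ => rfl
  · exact mem_powerset.2 (map_subtype_subset t)
  · exact ⟨t.subtype (· ∈ s), by simp, subtype_map_of_mem (mem_powerset.1 ht)⟩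

theorem coe_sdiff_map_subtype {α : Type*} [DecidableEq α] (s : Finset α) (t : Finset s) :
    ((s \ t.map (.subtype (· ∈ s)) : Finset α) : Set α) = Subtype.val '' (t : Set s)ᶜ := by
  rw [coe_sdiff, coe_map, Set.image_compl_eq_range_sdiff_image Subtype.val_injective,
    Subtype.range_val]
  rfl

variable (n d : ℕ) (G : Finset (Finset (Fin n))) (F : Finset (faces G d))
  (R : Finset (faces G (d - 1)))

theorem isForest_map_iff :
    IsForest n d G (F.map (.subtype (· ∈ faces G d))) ↔
      LinearIndepOn ℚ ((incMatrix n d G).map (Int.cast : ℤ → ℚ)).col F := by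
  have hF : F.map (.subtype (· ∈ faces G d)) ⊆ faces G d := map_subtype_subset F
  rw [IsForest, and_iff_right hF]
  exact (linearIndependent_equiv' (F.equivMap _) rfl).symm

theorem isRoot_map_iff :
    IsRoot n d G (F.map (.subtype (· ∈ faces G d))) (R.map (.subtype (· ∈ faces G (d - 1)))) ↔
      IsSpanBasisOn ℚ (((incMatrix n d G).map (Int.cast : ℤ → ℚ)).submatrix id ((↑) : F → _)).row
        (↑R)ᶜ := by
  let F' := F.map (.subtype (· ∈ faces G d))
  let R' := R.map (.subtype (· ∈ faces G (d - 1)))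
  have hR : R' ⊆ faces G (d - 1) := map_subtype_subset R
  let row (r : Finset (Fin n)) (f : F') : ℚ := incEntry r f.1
  let L : (F' → ℚ) ≃ₗ[ℚ] (F → ℚ) := LinearEquiv.funCongrLeft ℚ ℚ (F.equivMap _)
  have hrow : (((incMatrix n d G).map (Int.cast : ℤ → ℚ)).submatrix id ((↑) : F → _)).row =
      L ∘ row ∘ Subtype.val := rfl
  have hroot : IsRoot n d G F' R' ↔
      LinearIndepOn ℚ row (faces G (d - 1) \ R' : Finset _) ∧
        Submodule.span ℚ (row '' (faces G (d - 1) \ R' : Finset _)) =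
          Submodule.span ℚ (Set.range (row ∘ ((↑) : faces G (d - 1) → _))) := by
    rw [IsRoot, and_iff_right hR, Set.image_eq_range]
    rfl
  rw [hroot, coe_sdiff_map_subtype, linearIndepOn_image_iff Subtype.val_injective,
    ← Set.image_comp, hrow, isSpanBasisOn_linearEquiv_comp_iff]
  rfl

theorem isRootedForest_map_iff :
    IsRootedForest n d G (F.map (.subtype (· ∈ faces G d)))
        (R.map (.subtype (· ∈ faces G (d - 1)))) ↔
      IsMatrixRootedForest ((incMatrix n d G).map (Int.cast : ℤ → ℚ)) F R :=
  and_congr (isForest_map_iff n d G F) (isRoot_map_iff n d G F R)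

theorem relSubgroup_map :
    relSubgroup n d G (F.map (.subtype (· ∈ faces G d))) (R.map (.subtype (· ∈ faces G (d - 1)))) =
      relBoundaries (incMatrix n d G) F R := by
  have hF (f : faces G d) : f.1 ∈ F.map (.subtype (· ∈ faces G d)) ↔ f ∈ F := mem_map' _
  have hR (r : faces G (d - 1)) : r.1 ∈ R.map (.subtype (· ∈ faces G (d - 1))) ↔ r ∈ R :=
    mem_map' _
  simp only [relSubgroup, hF, hR]
  refine congrArg AddSubgroup.closure (congrArg₂ (· ∪ ·) ?_ ?_) <;>
    exact Set.ext fun v => exists_congr fun _ => and_congr_right fun _ => eq_comm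

theorem lapMat_map_C_add_X_smul_one :
    (lapMat n d G).map Polynomial.C +
        (Polynomial.X : Polynomial ℤ) • (1 : Matrix _ _ (Polynomial ℤ)) =
      (incMatrix n d G).map (Int.cast : ℤ → Polynomial ℤ) *
          Matrix.diagonal (fun _ : faces G d => (1 : Polynomial ℤ)) *
        ((incMatrix n d G).map (Int.cast : ℤ → Polynomial ℤ)).transpose +
      Matrix.diagonal fun _ : faces G (d - 1) => Polynomial.X := by
  have hC : (Polynomial.C : ℤ → Polynomial ℤ) = Int.castRingHom (Polynomial ℤ) :=
    funext fun z => eq_intCast Polynomial.C z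
  rw [lapMat, hC, Matrix.map_mul, Matrix.diagonal_one, Matrix.mul_one,
    Matrix.smul_one_eq_diagonal]
  rfl

end SimplicialComplex

open scoped Classical in
/-- As an identity in `ℤ[x]`,
`det(L_G + x·Id) = Σ_{(F,R) rooted forest of G} |H_{d-1}(F,R)|² · x^{|R|}`. -/
theorem det_lap_add_X_eq_sum_rootedForests
    (n d : ℕ) (hn : 1 ≤ n) (hd : 1 ≤ d)
    (G : Finset (Finset (Fin n))) (hG : IsComplex n d G) :
    Matrix.det ((lapMat n d G).map Polynomial.C +
        (Polynomial.X : Polynomial ℤ) • (1 : Matrix _ _ (Polynomial ℤ))) =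
      ∑ F ∈ (faces G d).powerset, ∑ R ∈ (faces G (d - 1)).powerset,
        if IsRootedForest n d G F R then
          (Nat.card (((faces G (d - 1) : Finset (Finset (Fin n))) → ℤ) ⧸
              relSubgroup n d G F R) : Polynomial ℤ) ^ 2 * Polynomial.X ^ R.card
        else 0 := by
  simp_rw [lapMat_map_C_add_X_smul_one, det_lap_add_X_eq_sum_rootedForests_general,
    sum_powerset_eq_sum_map_subtype, isRootedForest_map_iff, relSubgroup_map]
  simp
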